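/- arXiv:1608.04279 — 2 statements merged into one kernel-verified Lean document; each statement's English description precedes it below -/
import Mathlib

section
/- Let d ≥ 2 and 2 ≤ k ≤ r be integers. There exists a family of 3r − 3 + (k−1)(d−2) points a : Fin (3r−3+(k−1)(d−2)) → ℝ^d such that for every function I : Fin (3r−3+(k−1)(d−2)) → Fin r there exists a k-element subset S ⊆ Fin r with ⋂_{i ∈ S} conv{a_j : I(j) = i} = ∅. (Equivalently, T(d,r,k) ≥ 3r − 2 + (k−1)(d−2).) -/
/-!
In the plane, put `r - 1` points on each of three rays from the origin that positively span the
plane, and split all the points into `r` parts. Every ray is missed by some part. The line through a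
ray separates the other two rays, so a part missing one of these and a part missing the other can
meet only on that line, and there only if together they have at least three points on it. Choosing
the ray that is missed by the fewest parts, one finds two parts that violate this. Hence two of the
parts have disjoint hulls, and so do any `k` parts that include them.

The dimension is raised by adding `k - 1` copies of a point outside the span of the family: among
`k` parts one avoids the new points, so a common point of their hulls lies in the old span, hence in
the hulls of the old parts.
-/

open Finset Function

theorem eq_or_eq_add_one_or_eq_add_two (l m : Fin 3) : m = l ∨ m = l + 1 ∨ m = l + 2 := by
  omega

section OrderedSemiring

variable {𝕜 E F J κ ι : Type*} [Semiring 𝕜] [PartialOrder 𝕜] [AddCommMonoid E] [Module 𝕜 E]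
  [AddCommMonoid F] [Module 𝕜 F]

variable (𝕜 ι) in
/-- A family `a` of points is free of Reay partitions if every partition of its index set into
(possibly empty) parts labelled by `ι` has `k` parts whose convex hulls have no common point. Thus
`T(d,r,k) > n` says that some family of `n` points in `ℝ^d` is free of them for `ι = Fin r`. -/
def NoReayPartition (k : ℕ) (a : J → E) : Prop :=
  ∀ I : J → ι, ∃ S : Finset ι, S.card = k ∧ ⋂ i ∈ S, convexHull 𝕜 (a '' {j | I j = i}) = ∅

namespace NoReayPartition

variable {k : ℕ} {a : J → E}

theorem of_exists_disjoint
    (h : ∀ I : J → ι, ∃ P Q, P ≠ Q ∧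
      Disjoint (convexHull 𝕜 (a '' {j | I j = P})) (convexHull 𝕜 (a '' {j | I j = Q}))) :
    NoReayPartition 𝕜 ι 2 a := by
  classical
  intro I
  obtain ⟨P, Q, hPQ, hdisj⟩ := h I
  refine ⟨{P, Q}, card_pair hPQ, ?_⟩
  simpa [Set.disjoint_iff_inter_eq_empty] using hdisj

theorem mono [Fintype ι] {l : ℕ} (h : NoReayPartition 𝕜 ι k a) (hkl : k ≤ l)
    (hl : l ≤ Fintype.card ι) : NoReayPartition 𝕜 ι l a := by
  intro I
  obtain ⟨S, hS, hempty⟩ := h I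
  obtain ⟨T, hST, hT⟩ := exists_superset_card_eq (hS.trans_le hkl) hl
  exact ⟨T, hT, Set.subset_eq_empty (Set.biInter_subset_biInter_left hST) hempty⟩

theorem comp_equiv {J' : Type*} (h : NoReayPartition 𝕜 ι k a) (φ : J' ≃ J) :
    NoReayPartition 𝕜 ι k (a ∘ φ) := by
  intro I
  obtain ⟨S, hS, hempty⟩ := h (I ∘ φ.symm)
  refine ⟨S, hS, ?_⟩
  simpa only [Set.image_comp, φ.image_eq_preimage_symm] using! hempty

theorem map (h : NoReayPartition 𝕜 ι k a) {f : E →ₗ[𝕜] F} (hf : Injective f) :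
    NoReayPartition 𝕜 ι k (f ∘ a) := by
  intro I
  obtain ⟨S, hS, hempty⟩ := h I
  have hSne : S.Nonempty := nonempty_of_ne_empty (by rintro rfl; simp at hempty)
  refine ⟨S, hS, ?_⟩
  simp only [Set.image_comp, ← f.image_convexHull]
  rw [← hf.injOn.image_biInter_eq hSne, hempty, Set.image_empty]

end NoReayPartition

/-- Three classes of points `p (l, ·)` together with three hyperplanes `h l = 0`, indexed
cyclically: the hyperplane of `l` contains the class `l` and separates the other two. The model is
given by three rays that positively span a plane. -/
structure IsTriFan (h : Fin 3 → E →ₗ[𝕜] 𝕜) (p : Fin 3 × κ → E) : Prop where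
  injective_class (l : Fin 3) : Injective fun t => p (l, t)
  apply_self (l : Fin 3) (t : κ) : h l (p (l, t)) = 0
  apply_add_one_neg (l : Fin 3) (t : κ) : h l (p (l + 1, t)) < 0
  apply_add_two_pos (l : Fin 3) (t : κ) : 0 < h l (p (l + 2, t))

namespace IsTriFan

variable {h : Fin 3 → E →ₗ[𝕜] 𝕜} {p : Fin 3 × κ → E} {A : Set (Fin 3 × κ)} {l : Fin 3}

theorem apply_eq_zero_iff (hp : IsTriFan h p) {x : Fin 3 × κ} : h l (p x) = 0 ↔ x.1 = l := by
  obtain ⟨m, t⟩ := x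
  obtain rfl | rfl | rfl := eq_or_eq_add_one_or_eq_add_two l m
  · simpa using hp.apply_self m t
  · simpa using (hp.apply_add_one_neg l t).ne
  · simpa using (hp.apply_add_two_pos l t).ne'

theorem injective (hp : IsTriFan h p) : Injective p := by
  rintro ⟨l, s⟩ ⟨m, t⟩ hst
  obtain rfl : m = l := hp.apply_eq_zero_iff.1 (hst ▸ hp.apply_self l s)
  exact congrArg _ (hp.injective_class m hst)

theorem image_inter_ker (hp : IsTriFan h p) :
    p '' A ∩ {y | h l y = 0} = p '' (A ∩ {x | x.1 = l}) := by
  rw [← Set.image_inter_preimage]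
  exact congrArg (p '' ·) (congrArg (A ∩ ·) (Set.ext fun _ => hp.apply_eq_zero_iff))

theorem apply_nonneg (hp : IsTriFan h p) (hA : ∀ t, (l + 1, t) ∉ A) :
    ∀ y ∈ p '' A, 0 ≤ h l y := by
  rintro _ ⟨⟨m, t⟩, hA', rfl⟩
  obtain rfl | rfl | rfl := eq_or_eq_add_one_or_eq_add_two l m
  · exact (hp.apply_self m t).ge
  · exact absurd hA' (hA t)
  · exact (hp.apply_add_two_pos l t).le

theorem apply_nonpos (hp : IsTriFan h p) (hA : ∀ t, (l + 2, t) ∉ A) :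
    ∀ y ∈ p '' A, h l y ≤ 0 := by
  rintro _ ⟨⟨m, t⟩, hA', rfl⟩
  obtain rfl | rfl | rfl := eq_or_eq_add_one_or_eq_add_two l m
  · exact (hp.apply_self m t).le
  · exact (hp.apply_add_one_neg l t).le
  · exact absurd hA' (hA t)

end IsTriFan

end OrderedSemiring

variable {𝕜 E J κ ι : Type*} [Field 𝕜] [LinearOrder 𝕜] [IsStrictOrderedRing 𝕜]
  [AddCommGroup E] [Module 𝕜 E]

section ConvexHull

variable {s t : Set E} {f : E →ₗ[𝕜] 𝕜}

theorem mem_convexHull_inter_ker {x : E} (hs : ∀ y ∈ s, 0 ≤ f y) (hx : x ∈ convexHull 𝕜 s)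
    (hfx : f x ≤ 0) : x ∈ convexHull 𝕜 (s ∩ {y | f y = 0}) := by
  set C := convexHull 𝕜 (s ∩ {y | f y = 0})
  have hconv : Convex 𝕜 {y | 0 ≤ f y ∧ (f y = 0 → y ∈ C)} := by
    rintro y ⟨hy, hyC⟩ z ⟨hz, hzC⟩ a b ha hb hab
    have hay := mul_nonneg ha hy
    have hbz := mul_nonneg hb hz
    simp only [Set.mem_ofPred_eq, map_add, map_smul, smul_eq_mul]
    refine ⟨add_nonneg hay hbz, fun h => ?_⟩
    obtain ⟨hay0, hbz0⟩ := (add_eq_zero_iff_of_nonneg hay hbz).1 h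
    rcases mul_eq_zero.1 hay0 with rfl | hy0
    · obtain rfl : b = 1 := by simpa using hab
      simpa using hzC (by simpa using hbz0)
    rcases mul_eq_zero.1 hbz0 with rfl | hz0
    · obtain rfl : a = 1 := by simpa using hab
      simpa using hyC hy0
    exact convex_convexHull 𝕜 _ (hyC hy0) (hzC hz0) ha hb hab
  have hsub : s ⊆ {y | 0 ≤ f y ∧ (f y = 0 → y ∈ C)} := fun y hy =>
    ⟨hs y hy, fun hfy => subset_convexHull 𝕜 _ ⟨hy, hfy⟩⟩
  obtain ⟨hfx0, hxC⟩ := convexHull_min hsub hconv hx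
  exact hxC (hfx.antisymm hfx0)

theorem disjoint_convexHull_of_inter_ker (hs : ∀ y ∈ s, 0 ≤ f y) (ht : ∀ y ∈ t, f y ≤ 0)
    (hst : Disjoint (convexHull 𝕜 (s ∩ {y | f y = 0})) (convexHull 𝕜 (t ∩ {y | f y = 0}))) :
    Disjoint (convexHull 𝕜 s) (convexHull 𝕜 t) := by
  rw [Set.disjoint_left] at hst ⊢
  intro x hxs hxt
  have hfx_nonneg : 0 ≤ f x := convexHull_min hs (convex_halfSpace_ge f.isLinear 0) hxs
  have hfx_nonpos : f x ≤ 0 := convexHull_min ht (convex_halfSpace_le f.isLinear 0) hxt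
  refine hst (mem_convexHull_inter_ker hs hxs hfx_nonpos) ?_
  simpa using mem_convexHull_inter_ker (f := -f) (by simpa using ht) hxt (by simpa using hfx_nonneg)

end ConvexHull

namespace NoReayPartition

variable {k : ℕ}

theorem sumElim [Fintype κ] {a : J → E} {v : κ → E} {f : E →ₗ[𝕜] 𝕜} (h : NoReayPartition 𝕜 ι k a)
    (hκ : Fintype.card κ < k) (ha : ∀ j, f (a j) = 0) (hv : ∀ c, 0 < f (v c)) :
    NoReayPartition 𝕜 ι k (Sum.elim a v) := by
  classical
  intro I
  obtain ⟨S, hS, hempty⟩ := h (I ∘ Sum.inl)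
  refine ⟨S, hS, Set.eq_empty_of_forall_notMem fun x hx => ?_⟩
  rw [Set.mem_iInter₂] at hx
  obtain ⟨P, hPS, hP⟩ : ∃ P ∈ S, P ∉ univ.image (I ∘ Sum.inr) :=
    exists_mem_notMem_of_card_lt_card (card_image_le.trans_lt (hκ.trans_eq hS.symm))
  have hfx : f x = 0 := by
    refine convexHull_min ?_ (convex_hyperplane f.isLinear 0) (hx P hPS)
    rintro _ ⟨j | c, hj, rfl⟩
    · exact ha j
    · exact absurd (mem_image.2 ⟨c, mem_univ c, Set.mem_ofPred.1 hj⟩) hP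
  have hmem : ∀ i ∈ S, x ∈ convexHull 𝕜 (a '' {j | I (Sum.inl j) = i}) := by
    intro i hi
    refine convexHull_mono ?_ (mem_convexHull_inter_ker ?_ (hx i hi) hfx.le)
    · rintro _ ⟨⟨j | c, hj, rfl⟩, hfj⟩
      · exact ⟨j, hj, rfl⟩
      · exact absurd hfj (hv c).ne'
    · rintro _ ⟨j | c, -, rfl⟩
      · exact (ha j).ge
      · exact (hv c).le
  exact hempty.subset (Set.mem_iInter₂.2 hmem)

theorem exists_pi_add {n d : ℕ} {a : Fin n → Fin d → 𝕜} (h : NoReayPartition 𝕜 ι k a) (hk : 0 < k)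
    (e : ℕ) : ∃ b : Fin (n + (k - 1) * e) → Fin (d + e) → 𝕜, NoReayPartition 𝕜 ι k b := by
  induction e with
  | zero => exact ⟨a, h⟩
  | succ e ih =>
    obtain ⟨b, hb⟩ := ih
    let embed : (Fin (d + e) → 𝕜) →ₗ[𝕜] Fin (d + e + 1) → 𝕜 := LinearMap.vecCons 0 LinearMap.id
    have hembed : Injective embed := fun x y hxy => Matrix.vecCons_inj.1 hxy |>.2
    let apex : Fin (k - 1) → Fin (d + e + 1) → 𝕜 := fun _ => Pi.single 0 1
    have hcone : NoReayPartition 𝕜 ι k (Sum.elim (embed ∘ b) apex) :=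
      (hb.map hembed).sumElim (f := LinearMap.proj 0) (by simpa using hk)
        (by simp [embed]) (by simp [apex])
    rw [mul_add_one, ← add_assoc, ← add_assoc]
    exact ⟨_, hcone.comp_equiv finSumFinEquiv.symm⟩

end NoReayPartition

section Counting

variable [Fintype ι]

theorem exists_mem_le_one_of_card_filter_eq_zero_le {N : ι → ℕ} {T : Finset ι}
    (hN : ∑ i, N i < Fintype.card ι) (hT : #{i | N i = 0} ≤ #T) : ∃ i ∈ T, N i ≤ 1 := by
  classical
  by_contra! hlarge
  -- The excess of `N` over `1` on `T` makes up for its zeros.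
  have hpointwise : ∀ i, 1 + (if i ∈ T then 1 else 0) ≤ N i + if N i = 0 then 1 else 0 := by
    intro i
    by_cases hi : i ∈ T
    · have := hlarge i hi
      grind
    · grind
  have hsum := sum_le_sum fun i (_ : i ∈ univ) => hpointwise i
  simp only [sum_add_distrib, ← card_filter, filter_mem_eq_inter, univ_inter, sum_const, card_univ,
    smul_eq_mul, mul_one] at hsum
  omega

theorem exists_ne_eq_zero_eq_zero_of_sum_lt_card {N : Fin 3 → ι → ℕ}
    (hN : ∀ l, ∑ i, N l i < Fintype.card ι) (hne : ∀ i, ∃ l, N l i ≠ 0) :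
    ∃ l P Q, P ≠ Q ∧ N (l + 1) P = 0 ∧ N (l + 2) Q = 0 ∧
      (N l P = 0 ∨ N l P ≤ 1 ∧ N l Q ≤ 1) := by
  obtain ⟨l, hl⟩ := Finite.exists_min fun l => #{i | N l i = 0}
  obtain ⟨P, hP, hP1⟩ := exists_mem_le_one_of_card_filter_eq_zero_le (hN l) (hl (l + 1))
  obtain ⟨Q, hQ, hQ1⟩ := exists_mem_le_one_of_card_filter_eq_zero_le (hN l) (hl (l + 2))
  rw [mem_filter_univ] at hP hQ
  rcases ne_or_eq P Q with hPQ | rfl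
  · exact ⟨l, P, Q, hPQ, hP, hQ, .inr ⟨hP1, hQ1⟩⟩
  -- A part `P` that misses two rays meets no other part `R` that misses the third.
  obtain ⟨R, -, hR⟩ : ∃ R ∈ univ, N l R < 1 := exists_lt_of_sum_lt (by simpa using hN l)
  rw [Nat.lt_one_iff] at hR
  have hPR : P ≠ R := by
    rintro rfl
    obtain ⟨m, hm⟩ := hne P
    rcases eq_or_eq_add_one_or_eq_add_two l m with rfl | rfl | rfl <;> contradiction
  refine ⟨l + 1, P, R, hPR, ?_, ?_, .inl hP⟩
  · rwa [add_assoc]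
  · rwa [add_assoc, show (1 + 2 : Fin 3) = 0 from rfl, add_zero]

end Counting

namespace IsTriFan

variable {h : Fin 3 → E →ₗ[𝕜] 𝕜} {p : Fin 3 × κ → E} {A B : Set (Fin 3 × κ)} {l : Fin 3}

theorem disjoint_convexHull_image (hp : IsTriFan h p) (hAB : Disjoint A B)
    (hA : ∀ t, (l + 1, t) ∉ A) (hB : ∀ t, (l + 2, t) ∉ B)
    (hl : A ∩ {x | x.1 = l} = ∅ ∨
      (A ∩ {x | x.1 = l}).Subsingleton ∧ (B ∩ {x | x.1 = l}).Subsingleton) :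
    Disjoint (convexHull 𝕜 (p '' A)) (convexHull 𝕜 (p '' B)) := by
  refine disjoint_convexHull_of_inter_ker (hp.apply_nonneg hA) (hp.apply_nonpos hB) ?_
  rw [hp.image_inter_ker, hp.image_inter_ker]
  rcases hl with hAl | ⟨hAl, hBl⟩
  · simp [hAl]
  · rw [(hAl.image p).convex.convexHull_eq, (hBl.image p).convex.convexHull_eq,
      Set.disjoint_image_iff hp.injective]
    exact hAB.mono Set.inter_subset_left Set.inter_subset_left

theorem exists_disjoint_convexHull [Fintype κ] [Fintype ι] (hp : IsTriFan h p)
    (hκι : Fintype.card κ < Fintype.card ι) {I : Fin 3 × κ → ι} (hI : Surjective I) :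
    ∃ P Q, P ≠ Q ∧
      Disjoint (convexHull 𝕜 (p '' {x | I x = P})) (convexHull 𝕜 (p '' {x | I x = Q})) := by
  classical
  let N (l : Fin 3) (P : ι) : ℕ := #{t | I (l, t) = P}
  have hsum (l : Fin 3) : ∑ P, N l P < Fintype.card ι := by
    have hfibers : ∑ P, N l P = Fintype.card κ :=
      (card_eq_sum_card_fiberwise (f := fun t => I (l, t)) fun _ _ => mem_univ _).symm
    rwa [hfibers]
  have hne (P : ι) : ∃ l, N l P ≠ 0 := by
    obtain ⟨⟨l, t⟩, rfl⟩ := hI P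
    exact ⟨l, card_ne_zero_of_mem (mem_filter_univ t |>.2 rfl)⟩
  have hzero {l : Fin 3} {P : ι} (hP : N l P = 0) (t : κ) : I (l, t) ≠ P := by
    simpa using filter_eq_empty_iff.1 (card_eq_zero.1 hP) (mem_univ t)
  have hle_one {l : Fin 3} {P : ι} (hP : N l P ≤ 1) :
      ({x | I x = P} ∩ {x | x.1 = l}).Subsingleton := by
    rintro ⟨_, s⟩ ⟨hs, rfl⟩ ⟨_, t⟩ ⟨ht, rfl⟩
    exact congrArg _ (card_le_one.1 hP s (by simpa using hs) t (by simpa using ht))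
  obtain ⟨l, P, Q, hPQ, hP, hQ, hl⟩ := exists_ne_eq_zero_eq_zero_of_sum_lt_card hsum hne
  refine ⟨P, Q, hPQ, hp.disjoint_convexHull_image ?_ (hzero hP) (hzero hQ)
    (hl.imp (fun hP0 => ?_) (.imp hle_one hle_one))⟩
  · exact Set.disjoint_left.2 fun x hxP hxQ => hPQ (hxP.symm.trans hxQ)
  · refine Set.eq_empty_of_forall_notMem ?_
    rintro ⟨_, t⟩ ⟨ht, rfl⟩
    exact hzero hP0 t ht

theorem noReayPartition [Fintype κ] [Fintype ι] [Nontrivial ι] (hp : IsTriFan h p)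
    (hκι : Fintype.card κ < Fintype.card ι) : NoReayPartition 𝕜 ι 2 p := by
  refine .of_exists_disjoint fun I => ?_
  by_cases hI : Surjective I
  · exact hp.exists_disjoint_convexHull hκι hI
  obtain ⟨P, hP⟩ := not_forall.1 hI
  obtain ⟨Q, hQP⟩ := exists_ne P
  have hempty : {x | I x = P} = ∅ := Set.eq_empty_of_forall_notMem fun x hx => hP ⟨x, hx⟩
  exact ⟨P, Q, hQP.symm, by simp [hempty]⟩

end IsTriFan

theorem isTriFan_rays (m : ℕ) :
    IsTriFan (![-.proj 1, .proj 0, .proj 1 - .proj 0] : Fin 3 → (Fin 2 → 𝕜) →ₗ[𝕜] 𝕜)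
      fun x : Fin 3 × Fin m => ((x.2 : 𝕜) + 1) • ![![1, 0], ![0, 1], ![-1, -1]] x.1 where
  injective_class l s t hst := by
    fin_cases l <;> simpa [Fin.ext_iff] using hst
  apply_self l t := by fin_cases l <;> simp
  apply_add_one_neg l t := by
    have : (-1 : 𝕜) < t := neg_one_lt_zero.trans_le (Nat.cast_nonneg _)
    fin_cases l <;> simpa
  apply_add_two_pos l t := by
    have : (0 : 𝕜) < t + 1 := by positivity
    fin_cases l <;> simpa

theorem exists_noReayPartition_plane {m r : ℕ} (hm : m < r) (hr : 2 ≤ r) :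
    ∃ a : Fin (3 * m) → Fin 2 → 𝕜, NoReayPartition 𝕜 (Fin r) 2 a := by
  have : Nontrivial (Fin r) := Fin.nontrivial_iff_two_le.2 hr
  have hplane := (isTriFan_rays (𝕜 := 𝕜) m).noReayPartition (ι := Fin r) (by simpa using hm)
  exact ⟨_, hplane.comp_equiv finProdFinEquiv.symm⟩

theorem reay_lower_bound_general {d r k : ℕ} (hd : 2 ≤ d) (hE : d ≤ Module.rank 𝕜 E) (hk : 2 ≤ k)
    (hkr : k ≤ r) :
    ∃ a : Fin (3 * r - 3 + (k - 1) * (d - 2)) → E, NoReayPartition 𝕜 (Fin r) k a := by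
  obtain ⟨v, hv⟩ := exists_linearIndependent_of_le_rank hE
  obtain ⟨e, rfl⟩ := Nat.exists_eq_add_of_le hd
  obtain ⟨a, ha⟩ := exists_noReayPartition_plane (𝕜 := 𝕜) (m := r - 1) (by omega) (hk.trans hkr)
  obtain ⟨b, hb⟩ := (ha.mono hk (by simpa using hkr)).exists_pi_add (by omega) e
  rw [show 3 * r - 3 = 3 * (r - 1) by omega, Nat.add_sub_cancel_left]
  exact ⟨_, hb.map hv.fintypeLinearCombination_injective⟩

/-- Lower bound `T(d,r,k) ≥ 3r - 2 + (k-1)(d-2)` for Reay's relaxed Tverberg problem: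
there is a family of `3r - 3 + (k-1)(d-2)` points in `ℝ^d` such that for every
partition of the index set into `r` parts, some `k` of the parts have convex hulls
with empty intersection. -/
theorem reay_lower_bound (d r k : ℕ) (hd : 2 ≤ d) (hk : 2 ≤ k) (hkr : k ≤ r) :
    ∃ a : Fin (3 * r - 3 + (k - 1) * (d - 2)) → EuclideanSpace ℝ (Fin d),
      ∀ I : Fin (3 * r - 3 + (k - 1) * (d - 2)) → Fin r,
        ∃ S : Finset (Fin r), S.card = k ∧
          (⋂ i ∈ S, convexHull ℝ (a '' {j | I j = i})) = ∅ := by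
  exact reay_lower_bound_general hd (by simp [← Module.finrank_eq_rank]) hk hkr
end

section
/- Let m ≥ 2, let C_1, …, C_m be sets (subsets of an arbitrary type α), and let W be a finite set such that |C_i ∩ C_j ∩ W| = 1 for all i ≠ j (W is a transversal of the pairwise intersections). If no element of W belongs to all of C_1, …, C_m, then m ≤ |W|. -/
/-!
Each `w ∈ W` is a clique `{i | w ∈ C i}` on the indices, and these cliques partition the edges of
the complete graph. So the indices are the points and the elements of `W` the lines of a linear
space, and the de Bruijn–Erdős theorem says that there are at least as many lines as points.

For infinitely many points the inequality holds for a simpler reason: a point is determined by any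
two of the lines through it, so the points embed into pairs of lines.
-/

open Cardinal Configuration

universe u v

section LinearSpace

variable (P : Type u) (L : Type v) [Membership P L] [HasLines P L]

theorem exists_ne_lines_through [Nontrivial P] (p : P) : ∃ l m : L, l ≠ m ∧ p ∈ l ∧ p ∈ m := by
  obtain ⟨q, hqp⟩ := exists_ne p
  obtain ⟨l, ⟨hpl, -⟩, -⟩ := HasLines.existsUnique_line P L p q hqp.symm
  obtain ⟨r, hrl⟩ := Nondegenerate.exists_point (P := P) l
  have hpr : p ≠ r := ne_of_mem_of_not_mem hpl hrl
  obtain ⟨m, ⟨hpm, hrm⟩, -⟩ := HasLines.existsUnique_line P L p r hpr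
  exact ⟨l, m, fun hlm => hrl (hlm ▸ hrm), hpl, hpm⟩

theorem exists_injective_points_to_line_pairs [Nontrivial P] :
    ∃ f : P → L × L, Function.Injective f := by
  choose l m hne hl hm using exists_ne_lines_through P L
  refine ⟨fun p => (l p, m p), fun p q hpq => ?_⟩
  obtain ⟨hlpq, hmpq⟩ := Prod.mk.inj hpq
  exact (Nondegenerate.eq_or_eq (hl p) (hlpq ▸ hl q) (hm p) (hmpq ▸ hm q)).resolve_right (hne p)

theorem lift_mk_points_le_lift_mk_lines_of_infinite [Infinite P] :
    lift.{v} #P ≤ lift.{u} #L := by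
  obtain ⟨f, hf⟩ := exists_injective_points_to_line_pairs P L
  have hpairs : Infinite (L × L) := .of_injective f hf
  have : Infinite L := (infinite_prod.mp hpairs).elim And.left And.right
  calc
    lift.{v} #P ≤ lift.{u} #(L × L) := lift_mk_le_lift_mk_of_injective hf
    _ = lift.{u} #L := by rw [mk_prod, lift_id, mul_eq_self (aleph0_le_mk L)]

theorem lift_mk_points_le_lift_mk_lines : lift.{v} #P ≤ lift.{u} #L := by
  cases finite_or_infinite P
  · cases finite_or_infinite L
    · have := Fintype.ofFinite P
      have := Fintype.ofFinite L
      simpa using HasLines.card_le P L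
    · calc
        lift.{v} #P ≤ ℵ₀ := lift_le_aleph0.mpr mk_le_aleph0
        _ ≤ lift.{u} #L := aleph0_le_lift.mpr (aleph0_le_mk L)
  · exact lift_mk_points_le_lift_mk_lines_of_infinite P L

end LinearSpace

/-- `W` is a transversal of the pairwise intersections of the family `C`: it meets `C i ∩ C j` in
exactly one element whenever `i ≠ j`. -/
def IsPairwiseTransversal {ι : Type u} {α : Type v} (C : ι → Set α) (W : Set α) : Prop :=
  Pairwise fun i j => (C i ∩ C j ∩ W).ncard = 1

/-- The incidence structure of the cliques `{i | w ∈ C i}`: the indices are points, the elements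
of `W` are lines, and `i` lies on `w` when `w ∈ C i`. -/
abbrev cliqueIncidence {ι : Type u} {α : Type v} (C : ι → Set α) (W : Set α) : Membership ι W :=
  ⟨fun w i => (w : α) ∈ C i⟩

namespace IsPairwiseTransversal

variable {ι : Type u} {α : Type v} {C : ι → Set α} {W : Set α} {i j : ι}

theorem exists_mem (h : IsPairwiseTransversal C W) (hij : i ≠ j) :
    ∃ w : W, (w : α) ∈ C i ∧ (w : α) ∈ C j := by
  have hne : (C i ∩ C j ∩ W).Nonempty := Set.nonempty_of_ncard_ne_zero (by simp [h hij])
  obtain ⟨w, hw, hwW⟩ := hne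
  exact ⟨⟨w, hwW⟩, hw⟩

theorem subsingleton_inter (h : IsPairwiseTransversal C W) (hij : i ≠ j) :
    (C i ∩ C j ∩ W).Subsingleton := by
  obtain ⟨u, hu⟩ := Set.ncard_eq_one.mp (h hij)
  exact hu ▸ Set.subsingleton_singleton

theorem exists_notMem [Nontrivial ι] (h : IsPairwiseTransversal C W)
    (hproper : ∀ w ∈ W, ∃ i, w ∉ C i) (i : ι) : ∃ w : W, (w : α) ∉ C i := by
  by_contra! hall
  obtain ⟨j, hji⟩ := exists_ne i
  obtain ⟨w, hwi, hwj⟩ := h.exists_mem hji.symm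
  obtain ⟨k, hwk⟩ := hproper w w.2
  have hjk : j ≠ k := fun hjk => hwk (hjk ▸ hwj)
  obtain ⟨v, hvj, hvk⟩ := h.exists_mem hjk
  have hvw : (v : α) = w :=
    h.subsingleton_inter hji.symm ⟨⟨hall v, hvj⟩, v.2⟩ ⟨⟨hwi, hwj⟩, w.2⟩
  exact hwk (hvw ▸ hvk)

/-- The linear space of a transversal: the line through `i ≠ j` is the element of
`C i ∩ C j ∩ W`. -/
noncomputable abbrev hasLines [Nontrivial ι] (h : IsPairwiseTransversal C W)
    (hproper : ∀ w ∈ W, ∃ i, w ∉ C i) : @HasLines ι W (cliqueIncidence C W) :=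
  letI := cliqueIncidence C W
  { exists_point := fun w => hproper w w.2
    exists_line := h.exists_notMem hproper
    eq_or_eq := fun {_ _ w v} hwi hwj hvi hvj => or_iff_not_imp_left.mpr fun hij =>
      Subtype.ext (h.subsingleton_inter hij ⟨⟨hwi, hwj⟩, w.2⟩ ⟨⟨hvi, hvj⟩, v.2⟩)
    mkLine := fun hij => (h.exists_mem hij).choose
    mkLine_ax := fun hij => (h.exists_mem hij).choose_spec }

end IsPairwiseTransversal

theorem comb_thrackle_general {ι : Type u} {α : Type v} [Nontrivial ι] (C : ι → Set α) (W : Set α)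
    (htrans : IsPairwiseTransversal C W) (hproper : ∀ w ∈ W, ∃ i, w ∉ C i) :
    lift.{v} #ι ≤ lift.{u} #W :=
  letI := cliqueIncidence C W
  letI := htrans.hasLines hproper
  lift_mk_points_le_lift_mk_lines ι W

/-- Combinatorial thrackle bound: if `C₁, …, C_m` (with `m ≥ 2`) are sets admitting a
finite transversal `W` of their pairwise intersections, i.e. `|C i ∩ C j ∩ W| = 1`
for all `i ≠ j`, and no element of `W` belongs to all the `C i`, then `m ≤ |W|`. -/
theorem comb_thrackle {α : Type*} (m : ℕ) (hm : 2 ≤ m)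
    (C : Fin m → Set α) (W : Finset α)
    (htrans : ∀ i j, i ≠ j → (C i ∩ C j ∩ (W : Set α)).ncard = 1)
    (hproper : ∀ w ∈ W, ∃ i, w ∉ C i) :
    m ≤ W.card := by
  have : Nontrivial (Fin m) := Fin.nontrivial_iff_two_le.mpr hm
  simpa using comb_thrackle_general C W (fun i j => htrans i j) hproper
end
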